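/- arXiv:cs/0207064 — 2 statements merged into one kernel-verified Lean document; each statement's English description precedes it below -/
import Mathlib

section
/- Interpolation for circumscription fails if the interpolant is required to lie in 𝓛(T) ∩ 𝓛(φ) rather than 𝓛(T) ∩ 𝓛(L(φ) ∪ P): let p and q be two distinct propositional variables and T = {¬p → q}. Then Circ[T;{p};{q}] ⊨ q, yet there is no set γ of formulas with γ ⊆ 𝓛({q}), T ⊨ γ and Circ[γ;{p};{q}] ⊨ q (indeed every formula in 𝓛({q}) entailed by T is a tautology, and Circ[γ;{p};{q}] ⊭ q for any set γ of tautologies). -/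
namespace NMR

/-- Propositional formulas over a variable type `V`. -/
inductive PropForm (V : Type*) : Type _ where
  | var : V → PropForm V
  | tru : PropForm V
  | fls : PropForm V
  | neg : PropForm V → PropForm V
  | conj : PropForm V → PropForm V → PropForm V
  | disj : PropForm V → PropForm V → PropForm V
  | impl : PropForm V → PropForm V → PropForm V

variable {V : Type*}

/-- Truth value of a formula under a valuation. -/
def PropForm.eval (ν : V → Bool) : PropForm V → Bool
  | .var v => ν v
  | .tru => true
  | .fls => false
  | .neg φ => !(φ.eval ν)
  | .conj φ ψ => φ.eval ν && ψ.eval ν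
  | .disj φ ψ => φ.eval ν || ψ.eval ν
  | .impl φ ψ => !(φ.eval ν) || ψ.eval ν

/-- The set of variables occurring in a formula. -/
def PropForm.vars : PropForm V → Set V
  | .var v => {v}
  | .tru => ∅
  | .fls => ∅
  | .neg φ => φ.vars
  | .conj φ ψ => φ.vars ∪ ψ.vars
  | .disj φ ψ => φ.vars ∪ ψ.vars
  | .impl φ ψ => φ.vars ∪ ψ.vars

/-- `ν ⊨ φ`. -/
def Sat (ν : V → Bool) (φ : PropForm V) : Prop := φ.eval ν = true

/-- `ν ⊨ T` for a set of formulas. -/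
def SatSet (ν : V → Bool) (T : Set (PropForm V)) : Prop := ∀ φ ∈ T, Sat ν φ

/-- `T ⊨ φ`. -/
def Entails (T : Set (PropForm V)) (φ : PropForm V) : Prop :=
  ∀ ν : V → Bool, SatSet ν T → Sat ν φ

/-- `T ⊨ Γ` for a set `Γ`. -/
def EntailsSet (T Γ : Set (PropForm V)) : Prop := ∀ φ ∈ Γ, Entails T φ

/-- A tautology is satisfied by every valuation. -/
def Tautology (φ : PropForm V) : Prop := ∀ ν : V → Bool, Sat ν φ

/-- `L(T)`: the set of variables occurring in a set of formulas. -/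
def varsOf (T : Set (PropForm V)) : Set V := ⋃ φ ∈ T, φ.vars

/-- `𝓛(S)`: the set of formulas all of whose variables lie in `S`. -/
def FormsOver (S : Set V) : Set (PropForm V) := {φ | φ.vars ⊆ S}

/-- `Cn^S(T)`: the formulas in `𝓛(S)` entailed by `T`. -/
def Cn (S : Set V) (T : Set (PropForm V)) : Set (PropForm V) :=
  {φ | φ.vars ⊆ S ∧ Entails T φ}

/-- Two sets of formulas are logically equivalent iff they have the same models. -/
def EquivTheories (T T' : Set (PropForm V)) : Prop :=
  ∀ ν : V → Bool, SatSet ν T ↔ SatSet ν T'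

/-- `ν ≤_{P,Q} ν'`. -/
def circLe (P Q : Set V) (ν ν' : V → Bool) : Prop :=
  (∀ x, x ∉ P ∪ Q → ν x = ν' x) ∧
    {x | x ∈ P ∧ ν x = true} ⊆ {x | x ∈ P ∧ ν' x = true}

/-- `ν <_{P,Q} ν'`. -/
def circLt (P Q : Set V) (ν ν' : V → Bool) : Prop :=
  circLe P Q ν ν' ∧ {x | x ∈ P ∧ ν x = true} ⊂ {x | x ∈ P ∧ ν' x = true}

/-- `ν` is a model of `Circ[T;P;Q]`. -/
def CircModel (T : Set (PropForm V)) (P Q : Set V) (ν : V → Bool) : Prop :=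
  SatSet ν T ∧ ¬ ∃ ν' : V → Bool, SatSet ν' T ∧ circLt P Q ν' ν

/-- `Circ[T;P;Q] ⊨ φ`. -/
def CircEntails (T : Set (PropForm V)) (P Q : Set V) (φ : PropForm V) : Prop :=
  ∀ ν : V → Bool, CircModel T P Q ν → Sat ν φ

theorem eval_congr_vars {V : Type*} (ν μ : V → Bool) (φ : PropForm V)
    (h : ∀ x ∈ φ.vars, ν x = μ x) : φ.eval ν = φ.eval μ := by
  induction φ with
  | var v => exact h v rfl
  | tru => rfl
  | fls => rfl
  | neg φ ih => simp only [PropForm.eval]; rw [ih h]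
  | conj φ ψ ih1 ih2 =>
    simp only [PropForm.eval]
    rw [ih1 fun x hx => h x (Or.inl hx), ih2 fun x hx => h x (Or.inr hx)]
  | disj φ ψ ih1 ih2 =>
    simp only [PropForm.eval]
    rw [ih1 fun x hx => h x (Or.inl hx), ih2 fun x hx => h x (Or.inr hx)]
  | impl φ ψ ih1 ih2 =>
    simp only [PropForm.eval]
    rw [ih1 fun x hx => h x (Or.inl hx), ih2 fun x hx => h x (Or.inr hx)]

/-- the counterexample showing the interpolant cannot be required to
lie in `𝓛(T) ∩ 𝓛(φ)`. -/
theorem circ_interpolation_counterexample {V : Type*} (p q : V) (hpq : p ≠ q) :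
    CircEntails {PropForm.impl (PropForm.neg (PropForm.var p)) (PropForm.var q)}
        {p} {q} (PropForm.var q) ∧
    (∀ ψ : PropForm V, ψ.vars ⊆ {q} →
      Entails {PropForm.impl (PropForm.neg (PropForm.var p)) (PropForm.var q)} ψ →
      Tautology ψ) ∧
    (∀ γ : Set (PropForm V), (∀ ψ ∈ γ, Tautology ψ) →
      ¬ CircEntails γ {p} {q} (PropForm.var q)) ∧
    ¬ ∃ γ : Set (PropForm V),
        γ ⊆ FormsOver {q} ∧
        EntailsSet {PropForm.impl (PropForm.neg (PropForm.var p)) (PropForm.var q)} γ ∧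
        CircEntails γ {p} {q} (PropForm.var q) := by
  classical
  have h2 : ∀ ψ : PropForm V, ψ.vars ⊆ {q} →
      Entails {PropForm.impl (PropForm.neg (PropForm.var p)) (PropForm.var q)} ψ →
      Tautology ψ := by
    intro ψ hψ hE ν
    have h := hE (Function.update ν p true) (by
      intro φ hφ
      rw [Set.mem_singleton_iff] at hφ
      subst hφ
      simp [Sat, PropForm.eval])
    unfold Sat at h ⊢
    rw [← h]
    apply eval_congr_vars
    intro x hx
    have hxq : x = q := hψ hx
    subst hxq
    rw [Function.update_of_ne hpq.symm]
  have h3 : ∀ γ : Set (PropForm V), (∀ ψ ∈ γ, Tautology ψ) →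
      ¬ CircEntails γ {p} {q} (PropForm.var q) := by
    intro γ hγ hC
    have h := hC (fun _ => false) ⟨fun φ hφ => hγ φ hφ _, by
      rintro ⟨ν', -, -, hlt⟩
      obtain ⟨x, hx, -⟩ := Set.exists_of_ssubset hlt
      exact absurd hx.2 (by simp)⟩
    simp [Sat, PropForm.eval] at h
  refine ⟨?_, h2, h3, ?_⟩
  · rintro ν ⟨hT, hmin⟩
    by_contra hq
    have hT' := hT _ rfl
    simp only [Sat, PropForm.eval] at hq hT'
    have hp : ν p = true := by simpa [hq] using hT'
    apply hmin
    refine ⟨Function.update (Function.update ν p false) q true, ?_, ⟨?_, ?_⟩, ?_⟩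
    · intro φ hφ
      rw [Set.mem_singleton_iff] at hφ
      subst hφ
      simp [Sat, PropForm.eval]
    · intro x hx
      simp only [Set.mem_union, Set.mem_singleton_iff, not_or] at hx
      rw [Function.update_of_ne hx.2, Function.update_of_ne hx.1]
    · rintro x ⟨rfl, -⟩
      exact ⟨rfl, hp⟩
    · refine (Set.ssubset_iff_of_subset ?_).2 ⟨p, ⟨rfl, hp⟩, ?_⟩
      · rintro x ⟨rfl, -⟩
        exact ⟨rfl, hp⟩
      · rintro ⟨-, h⟩
        rw [Function.update_of_ne hpq] at h
        simp at h
  · rintro ⟨γ, hγ, hE, hC⟩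
    exact h3 γ (fun ψ hψ => h2 ψ (hγ hψ) (hE ψ hψ)) hC

end NMR
end

section
/- (Interpolation for Cautious Default Logic 1.) Let ⟨W, D⟩ be a propositional default theory over a finite variable set and φ a propositional formula. If W |~_D φ, then there exist formulas γ₁ ∈ 𝓛(W) ∩ 𝓛(D ∪ {φ}) and γ₂ ∈ 𝓛(W ∪ D) ∩ 𝓛(φ) such that all of the following hold: W ⊨ γ₁, {γ₁} |~_D γ₂, γ₂ ⊨ φ, W |~_D γ₂, and {γ₁} |~_D φ. -/
namespace NMR

variable {V : Type*}

/-- A Reiter default: prerequisite, a finite nonempty set of justifications,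
and a consequent. -/
structure Default (V : Type*) where
  pre : PropForm V
  just : Set (PropForm V)
  just_finite : just.Finite
  just_nonempty : just.Nonempty
  cons : PropForm V

/-- All propositional consequences of `T`. -/
def CnAll (T : Set (PropForm V)) : Set (PropForm V) := {φ | Entails T φ}

/-- The closure conditions defining `Γ(S₀)` for the default theory `⟨W, D⟩`:
`W ⊆ S`, `Cn(S) = S`, and closure under the defaults applicable w.r.t. `S₀`. -/
def DLClosed (W : Set (PropForm V)) (D : Set (Default V)) (S₀ S : Set (PropForm V)) : Prop :=
  W ⊆ S ∧ CnAll S = S ∧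
    ∀ d ∈ D, d.pre ∈ S → (∀ β ∈ d.just, PropForm.neg β ∉ S₀) → d.cons ∈ S

/-- `Γ(S₀)`: the least set satisfying the closure conditions (the intersection
of all such sets, which is itself such a set). -/
def GammaOp (W : Set (PropForm V)) (D : Set (Default V)) (S₀ : Set (PropForm V)) :
    Set (PropForm V) := ⋂₀ {S | DLClosed W D S₀ S}

/-- `E` is an extension of `⟨W, D⟩` iff `Γ(E) = E`. -/
def IsExtension (W : Set (PropForm V)) (D : Set (Default V)) (E : Set (PropForm V)) : Prop :=
  GammaOp W D E = E

/-- Cautious entailment `W |~_D φ`. -/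
def Cautious (W : Set (PropForm V)) (D : Set (Default V)) (φ : PropForm V) : Prop :=
  ∀ E : Set (PropForm V), IsExtension W D E → φ ∈ E

/-- Brave entailment `W |~^b_D φ`. -/
def Brave (W : Set (PropForm V)) (D : Set (Default V)) (φ : PropForm V) : Prop :=
  ∃ E : Set (PropForm V), IsExtension W D E ∧ φ ∈ E

/-- `L(D)`: the variables occurring in prerequisites, justifications or
consequents of defaults in `D`. -/
def varsD (D : Set (Default V)) : Set V :=
  ⋃ d ∈ D, (d.pre.vars ∪ (⋃ β ∈ d.just, PropForm.vars β) ∪ d.cons.vars)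

theorem eval_congr (φ : PropForm V) (ν μ : V → Bool) (h : ∀ v ∈ φ.vars, ν v = μ v) :
    φ.eval ν = φ.eval μ := by
  induction φ with
  | var v => exact h v rfl
  | tru => rfl
  | fls => rfl
  | neg a iha =>
    simp only [PropForm.eval]
    rw [iha h]
  | conj a b iha ihb =>
    simp only [PropForm.eval]
    rw [iha (fun v hv => h v (Or.inl hv)), ihb (fun v hv => h v (Or.inr hv))]
  | disj a b iha ihb =>
    simp only [PropForm.eval]
    rw [iha (fun v hv => h v (Or.inl hv)), ihb (fun v hv => h v (Or.inr hv))]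
  | impl a b iha ihb =>
    simp only [PropForm.eval]
    rw [iha (fun v hv => h v (Or.inl hv)), ihb (fun v hv => h v (Or.inr hv))]

theorem sat_congr {φ : PropForm V} {ν μ : V → Bool} (h : ∀ v ∈ φ.vars, ν v = μ v)
    (hs : Sat ν φ) : Sat μ φ := by
  unfold Sat at *
  rw [← eval_congr φ ν μ h]
  exact hs

theorem satSet_congr {T : Set (PropForm V)} {ν μ : V → Bool}
    (h : ∀ v ∈ varsOf T, ν v = μ v) (hs : SatSet ν T) : SatSet μ T := fun φ hφ =>
  sat_congr (fun v hv => h v (Set.mem_biUnion hφ hv)) (hs φ hφ)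

theorem exists_bigDisj {α : Type*} (S : Set V) (f : α → PropForm V)
    (hf : ∀ a, (f a).vars ⊆ S) (F : Finset α) :
    ∃ γ : PropForm V, γ.vars ⊆ S ∧ ∀ ν, Sat ν γ ↔ ∃ a ∈ F, Sat ν (f a) := by
  classical
  induction F using Finset.induction_on with
  | empty => exact ⟨.fls, by simp [PropForm.vars], by simp [Sat, PropForm.eval]⟩
  | insert a F _ ih =>
    obtain ⟨γ, h1, h2⟩ := ih
    refine ⟨.disj (f a) γ, Set.union_subset (hf a) h1, fun ν => ?_⟩
    rw [Finset.exists_mem_insert, ← h2]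
    simp [Sat, PropForm.eval]

theorem exists_bigConj {α : Type*} (S : Set V) (f : α → PropForm V)
    (hf : ∀ a, (f a).vars ⊆ S) (F : Finset α) :
    ∃ γ : PropForm V, γ.vars ⊆ S ∧ ∀ ν, Sat ν γ ↔ ∀ a ∈ F, Sat ν (f a) := by
  classical
  induction F using Finset.induction_on with
  | empty => exact ⟨.tru, by simp [PropForm.vars], by simp [Sat, PropForm.eval]⟩
  | insert a F _ ih =>
    obtain ⟨γ, h1, h2⟩ := ih
    refine ⟨.conj (f a) γ, Set.union_subset (hf a) h1, fun ν => ?_⟩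
    rw [Finset.forall_mem_insert, ← h2]
    simp [Sat, PropForm.eval]

/-- Over finitely many variables, every property of valuations depending only on `S` is
defined by a formula over `S`. -/
theorem exists_form [Finite V] (S : Set V) (P : (V → Bool) → Prop)
    (hP : ∀ ν μ, (∀ v ∈ S, ν v = μ v) → P ν → P μ) :
    ∃ γ : PropForm V, γ.vars ⊆ S ∧ ∀ ν, Sat ν γ ↔ P ν := by
  classical
  haveI := Fintype.ofFinite V
  have diag : ∀ μ : V → Bool, ∃ γ : PropForm V, γ.vars ⊆ S ∧
      ∀ ν, Sat ν γ ↔ ∀ v ∈ S, μ v = ν v := by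
    intro μ
    obtain ⟨γ, h1, h2⟩ := exists_bigConj S
      (fun v => if v ∈ S then (if μ v then .var v else .neg (.var v)) else .tru)
      (by
        intro v
        by_cases hv : v ∈ S
        · cases hm : μ v <;> simp [hv, hm, PropForm.vars]
        · simp [hv, PropForm.vars]) Finset.univ
    refine ⟨γ, h1, fun ν => (h2 ν).trans ?_⟩
    simp only [Finset.mem_univ, true_implies]
    refine forall_congr' fun v => ?_
    by_cases hv : v ∈ S
    · cases hm : μ v <;> cases hn : ν v <;> simp [hv, hm, hn, Sat, PropForm.eval]
    · simp [hv, Sat, PropForm.eval]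
  choose g g1 g2 using diag
  obtain ⟨γ, h1, h2⟩ := exists_bigDisj S g g1 (Finset.univ.filter P)
  refine ⟨γ, h1, fun ν => (h2 ν).trans ⟨?_, fun h => ?_⟩⟩
  · rintro ⟨μ, hμ, hs⟩
    exact hP μ ν ((g2 μ ν).1 hs) (Finset.mem_filter.1 hμ).2
  · exact ⟨ν, Finset.mem_filter.2 ⟨Finset.mem_univ _, h⟩, (g2 ν ν).2 fun _ _ => rfl⟩

theorem subset_CnAll (T : Set (PropForm V)) : T ⊆ CnAll T := fun φ hφ _ hν => hν φ hφ

theorem CnAll_mono {T T' : Set (PropForm V)} (h : T ⊆ T') : CnAll T ⊆ CnAll T' :=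
  fun _ hφ ν hν => hφ ν fun ψ hψ => hν ψ (h hψ)

theorem CnAll_idem (T : Set (PropForm V)) : CnAll (CnAll T) = CnAll T :=
  Set.Subset.antisymm (fun _ hφ ν hν => hφ ν fun _ hψ => hψ ν hν) (subset_CnAll _)

theorem IsExtension.closed {W : Set (PropForm V)} {D : Set (Default V)} {E : Set (PropForm V)}
    (h : IsExtension W D E) : DLClosed W D E E := by
  have hsub : ∀ S, DLClosed W D E S → E ⊆ S := fun S hS φ hφ => by
    rw [← h] at hφ
    exact hφ S hS
  have hmem : ∀ φ, (∀ S, DLClosed W D E S → φ ∈ S) → φ ∈ E := fun φ hφ => by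
    rw [← h]
    exact fun S hS => hφ S hS
  refine ⟨fun φ hφ => hmem φ fun S hS => hS.1 hφ,
    Set.Subset.antisymm (fun φ hφ => hmem φ fun S hS => ?_) (subset_CnAll _),
    fun d hd hp hj => hmem _ fun S hS => hS.2.2 d hd (hsub S hS hp) hj⟩
  rw [← hS.2.1]
  exact CnAll_mono (hsub S hS) hφ

theorem IsExtension.least {W : Set (PropForm V)} {D : Set (Default V)} {E S : Set (PropForm V)}
    (h : IsExtension W D E) (hS : DLClosed W D E S) : E ⊆ S := fun φ hφ => by
  rw [← h] at hφ
  exact hφ S hS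

theorem cons_vars {D : Set (Default V)} {d : Default V} (hd : d ∈ D) :
    d.cons.vars ⊆ varsD D := fun _ hv => Set.mem_biUnion hd (Or.inr hv)

theorem pre_vars {D : Set (Default V)} {d : Default V} (hd : d ∈ D) :
    d.pre.vars ⊆ varsD D := fun _ hv => Set.mem_biUnion hd (Or.inl (Or.inl hv))

theorem just_vars {D : Set (Default V)} {d : Default V} (hd : d ∈ D) {β : PropForm V}
    (hβ : β ∈ d.just) : β.vars ⊆ varsD D :=
  fun _ hv => Set.mem_biUnion hd (Or.inl (Or.inr (Set.mem_biUnion hβ hv)))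

/-- The models of an extension only depend on the variables of the default theory. -/
theorem IsExtension.sat_congr {W : Set (PropForm V)} {D : Set (Default V)}
    {E : Set (PropForm V)} (h : IsExtension W D E) {S : Set V} (hW : varsOf W ⊆ S)
    (hD : varsD D ⊆ S) {ν μ : V → Bool} (hνμ : ∀ v ∈ S, ν v = μ v) (hν : SatSet ν E) :
    SatSet μ E := by
  have hc := h.closed
  have hsub : CnAll (E ∩ FormsOver S) ⊆ E := by
    conv_rhs => rw [← hc.2.1]
    exact CnAll_mono Set.inter_subset_left
  have hle : E ⊆ CnAll (E ∩ FormsOver S) := by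
    refine h.least ⟨fun φ hφ => subset_CnAll _ ⟨hc.1 hφ, fun v hv => ?_⟩, CnAll_idem _,
      fun d hd hp hj => subset_CnAll _ ⟨hc.2.2 d hd (hsub hp) hj, (cons_vars hd).trans hD⟩⟩
    exact hW (Set.mem_biUnion hφ hv)
  intro φ hφ
  refine hle hφ μ fun ψ hψ => ?_
  exact NMR.sat_congr (fun v hv => hνμ v (hψ.2 hv)) (hν ψ hψ.1)

/-- Interpolation for Cautious Default Logic 1. -/
theorem interpolation_cautious_dl1 {V : Type*} [Finite V]
    (W : Set (PropForm V)) (D : Set (Default V)) (φ : PropForm V)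
    (h : Cautious W D φ) :
    ∃ γ₁ γ₂ : PropForm V,
      γ₁.vars ⊆ varsOf W ∩ (varsD D ∪ φ.vars) ∧
      γ₂.vars ⊆ (varsOf W ∪ varsD D) ∩ φ.vars ∧
      Entails W γ₁ ∧
      Cautious {γ₁} D γ₂ ∧
      Entails {γ₂} φ ∧
      Cautious W D γ₂ ∧
      Cautious {γ₁} D φ := by
  classical
  -- `γ₁`: projection of `W` onto the variables of `D` and `φ`
  obtain ⟨γ₁, hv1, hs1⟩ := exists_form (varsOf W ∩ (varsD D ∪ φ.vars))
    (fun ν => ∃ ν', SatSet ν' W ∧ ∀ v ∈ varsD D ∪ φ.vars, ν v = ν' v) (by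
      rintro ν μ hνμ ⟨ν', hW, hK⟩
      refine ⟨fun v => if v ∈ varsD D ∪ φ.vars then μ v else ν' v,
        satSet_congr (fun v hv => ?_) hW, fun v hv => (if_pos hv).symm⟩
      by_cases hk : v ∈ varsD D ∪ φ.vars
      · rw [if_pos hk, ← hK v hk, hνμ v ⟨hv, hk⟩]
      · rw [if_neg hk])
  -- `γ₂`: weakest formula over the variables of `W` and `D` entailing `φ`
  obtain ⟨γ₂, hv2, hs2⟩ := exists_form ((varsOf W ∪ varsD D) ∩ φ.vars)
    (fun ν => ∀ ν', (∀ v ∈ varsOf W ∪ varsD D, ν v = ν' v) → Sat ν' φ) (by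
      intro ν μ hνμ hν μ' hμ'
      refine sat_congr (ν := fun v => if v ∈ varsOf W ∪ varsD D then ν v else μ' v)
        (fun v hv => ?_) (hν _ fun v hv => (if_pos hv).symm)
      by_cases hk : v ∈ varsOf W ∪ varsD D
      · rw [if_pos hk, ← hμ' v hk, hνμ v ⟨hk, hv⟩]
      · rw [if_neg hk])
  have hW1 : Entails W γ₁ := fun ν hν => (hs1 ν).2 ⟨ν, hν, fun _ _ => rfl⟩
  have hvar1 : varsOf {γ₁} ⊆ varsOf W ∩ (varsD D ∪ φ.vars) := by
    simpa [varsOf] using hv1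
  have key : ∀ W' : Set (PropForm V), varsOf W' ⊆ varsOf W → Cautious W' D φ →
      Cautious W' D γ₂ := by
    intro W' hW' hc E hE
    rw [← hE.closed.2.1]
    intro ν hν
    refine (hs2 ν).2 fun ν' hν' => ?_
    exact hE.sat_congr (hW'.trans Set.subset_union_left) Set.subset_union_right hν' hν φ (hc E hE)
  have hc1 : Cautious {γ₁} D φ := by
    intro E hE
    have hEc := hE.closed
    have hγE : γ₁ ∈ E := hEc.1 rfl
    -- conservativity
    have cons : ∀ ψ : PropForm V, ψ.vars ⊆ varsD D ∪ φ.vars → ψ ∈ CnAll (E ∪ W) → ψ ∈ E := by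
      intro ψ hψ hmem
      rw [← hEc.2.1]
      intro ν hν
      obtain ⟨ν', hW', hK⟩ := (hs1 ν).1 (hν γ₁ hγE)
      have hE' : SatSet ν' E :=
        hE.sat_congr (hvar1.trans Set.inter_subset_right) Set.subset_union_left hK hν
      refine sat_congr (fun v hv => (hK v (hψ hv)).symm) (hmem ν' ?_)
      rintro χ (hχ | hχ)
      · exact hE' χ hχ
      · exact hW' χ hχ
    have hEE' : E ⊆ CnAll (E ∪ W) := Set.subset_union_left.trans (subset_CnAll _)
    have hext : IsExtension W D (CnAll (E ∪ W)) := by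
      refine Set.Subset.antisymm (Set.sInter_subset_of_mem ⟨?_, CnAll_idem _, ?_⟩)
        (Set.subset_sInter fun S hS => ?_)
      · exact Set.subset_union_right.trans (subset_CnAll _)
      · intro d hd hp hj
        exact hEE' (hEc.2.2 d hd (cons _ ((pre_vars hd).trans Set.subset_union_left) hp)
          fun β hβ hn => hj β hβ (hEE' hn))
      · have hES : E ⊆ S := by
          refine hE.least ⟨?_, hS.2.1, fun d hd hp hj => hS.2.2 d hd hp fun β hβ hn =>
            hj β hβ (cons (.neg β) ((just_vars hd hβ).trans Set.subset_union_left) hn)⟩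
          rintro _ rfl
          rw [← hS.2.1]
          exact CnAll_mono hS.1 hW1
        conv_rhs => rw [← hS.2.1]
        exact CnAll_mono (Set.union_subset hES hS.1)
    exact cons φ Set.subset_union_right (h _ hext)
  refine ⟨γ₁, γ₂, hv1, ?_, hW1, key _ (hvar1.trans Set.inter_subset_left) hc1, ?_,
    key W subset_rfl h, hc1⟩
  · exact hv2
  · intro ν hν
    exact (hs2 ν).1 (hν γ₂ rfl) ν fun _ _ => rfl

end NMR
end
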